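/- Let α > 0, β ≥ 0, h > 0 and define F(a) = α/(2cos²(a/2)) + β/h² + 2tan²(a/2)·(β/h²)·(β/(αh²) + 1) for a ∈ (0, 2π), a ≠ π. Then (i) F(a) > α/2 + β/h² for every such a, and (ii) F(a) tends to α/2 + β/h² as a tends to 0 from the right. Hence the infimum of the critical curve over all modes equals α/2 + β/h², which yields the global stability threshold V'(h) = α/2 + β/h². -/

import Mathlib

/-!
Put `b = β / h²` and `v = α / 2 + b`. Since `1 / cos² = 1 + tan²`, the critical curve is an affine
function of `tan² (a / 2)`, and its slope is a perfect square up to the factor `2 / α`: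
`F a = v + (2 v² / α) tan² (a / 2)`. For `α > 0` and `v ≠ 0` the last term is positive at every
mode where `tan (a / 2)` is defined and nonzero, and it vanishes continuously as `a → 0`.
-/

open Real

/-- The critical curve of the linearized single-lane model at the mode `a`, with `b` standing for
`β / h ^ 2`, the only combination of `β` and `h` it involves. Where `cos (a / 2) = 0`, division by
zero gives it the value `b`. -/
noncomputable def criticalCurve (α b a : ℝ) : ℝ :=
  α / (2 * cos (a / 2) ^ 2) + b + 2 * tan (a / 2) ^ 2 * b * (b / α + 1)

lemma criticalCurve_zero (α b : ℝ) : criticalCurve α b 0 = α / 2 + b := by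
  simp [criticalCurve]

lemma criticalCurve_eq_add_mul_tan_sq {α a : ℝ} (hα : α ≠ 0) (b : ℝ) (ha : cos (a / 2) ≠ 0) :
    criticalCurve α b a = α / 2 + b + 2 * (α / 2 + b) ^ 2 / α * tan (a / 2) ^ 2 := by
  have secant_term : α / (2 * cos (a / 2) ^ 2) = α / 2 * (1 + tan (a / 2) ^ 2) := by
    rw [← inv_one_add_tan_sq ha, ← div_div, div_inv_eq_mul]
  rw [criticalCurve, secant_term]
  field

lemma continuousAt_criticalCurve (α b : ℝ) {a : ℝ} (ha : cos (a / 2) ≠ 0) :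
    ContinuousAt (criticalCurve α b) a := by
  have tan_half : ContinuousAt (fun x : ℝ ↦ tan (x / 2)) a :=
    (continuousAt_tan.2 ha).comp (f := fun x : ℝ ↦ x / 2) (by fun_prop)
  unfold criticalCurve
  fun_prop (disch := simp [ha])

lemma lt_criticalCurve {α b a : ℝ} (hα : 0 < α) (hb : α / 2 + b ≠ 0) (ha : sin a ≠ 0) :
    α / 2 + b < criticalCurve α b a := by
  have double_angle : sin a = 2 * sin (a / 2) * cos (a / 2) := by
    rw [← sin_two_mul, mul_div_cancel₀ a two_ne_zero]
  have hcos : cos (a / 2) ≠ 0 := right_ne_zero_of_mul (double_angle ▸ ha)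
  have hsin : sin (a / 2) ≠ 0 := right_ne_zero_of_mul (left_ne_zero_of_mul (double_angle ▸ ha))
  have htan : tan (a / 2) ≠ 0 := tan_eq_sin_div_cos (a / 2) ▸ div_ne_zero hsin hcos
  rw [criticalCurve_eq_add_mul_tan_sq hα.ne' b hcos]
  exact lt_add_of_pos_right _ (by positivity)

lemma sin_ne_zero_of_mem_Ioo_zero_two_pi {a : ℝ} (ha : a ∈ Set.Ioo 0 (2 * π)) (hπ : a ≠ π) :
    sin a ≠ 0 := by
  rcases hπ.lt_or_gt with a_lt_pi | pi_lt_a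
  · exact (sin_pos_of_pos_of_lt_pi ha.1 a_lt_pi).ne'
  · have shifted_pos : 0 < sin (a - π) :=
      sin_pos_of_pos_of_lt_pi (by linarith) (by linarith [ha.2])
    rw [sin_sub_pi] at shifted_pos
    exact neg_ne_zero.1 shifted_pos.ne'

theorem critical_curve_infimum_general {α b : ℝ} (hα : 0 < α) (hb : α / 2 + b ≠ 0) :
    (∀ a, sin a ≠ 0 → α / 2 + b < criticalCurve α b a) ∧
      Filter.Tendsto (criticalCurve α b) (nhds 0) (nhds (α / 2 + b)) :=
  ⟨fun _ ↦ lt_criticalCurve hα hb,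
    criticalCurve_zero α b ▸ (continuousAt_criticalCurve α b (by simp)).tendsto⟩

/-- The critical curve `F(a) = α/(2 cos²(a/2)) + β/h² + 2 tan²(a/2) (β/h²)(β/(α h²) + 1)`
lies strictly above `α/2 + β/h²` for every mode `a ∈ (0, 2π)`, `a ≠ π`, and tends to
`α/2 + β/h²` as `a → 0⁺`; hence the infimum of the critical curve over all modes equals
`α/2 + β/h²`, the global stability threshold. -/
theorem critical_curve_infimum
    (α β h : ℝ) (hα : 0 < α) (hβ : 0 ≤ β) (hh : 0 < h)
    (F : ℝ → ℝ)
    (hF : ∀ a : ℝ, F a = α / (2 * Real.cos (a / 2) ^ 2) + β / h ^ 2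
        + 2 * Real.tan (a / 2) ^ 2 * (β / h ^ 2) * (β / (α * h ^ 2) + 1)) :
    (∀ a ∈ Set.Ioo (0 : ℝ) (2 * Real.pi), a ≠ Real.pi → α / 2 + β / h ^ 2 < F a) ∧
      Filter.Tendsto F (nhdsWithin 0 (Set.Ioi 0)) (nhds (α / 2 + β / h ^ 2)) := by
  obtain rfl : F = criticalCurve α (β / h ^ 2) :=
    funext fun a ↦ by rw [hF, criticalCurve, div_div, mul_comm α]
  have ⟨above, limit⟩ := critical_curve_infimum_general (b := β / h ^ 2) hα (by positivity)
  exact ⟨fun a ha hπ ↦ above a (sin_ne_zero_of_mem_Ioo_zero_two_pi ha hπ),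
    limit.mono_left nhdsWithin_le_nhds⟩
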